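/- Assume K > K_low and that r(u) := (1 − G(u))/g(u) − u is strictly decreasing on [0, ū]. Then every optimal pair (a°, c°) of the regulator's problem satisfies a°(α,u) = 0 and c°(α,u) = 0 for almost every (α,u) with α > 0 and u > v. -/

import Mathlib

open MeasureTheory Set

noncomputable section

namespace Spectrum

/-- The CDF associated with a density via `F x = ∫ s in 0..x, f s`. -/
def CDF (f : ℝ → ℝ) (x : ℝ) : ℝ := ∫ s in (0:ℝ)..x, f s

/-- `r u = (1 - G u) / g u - u`. -/
def rFun (g : ℝ → ℝ) (u : ℝ) : ℝ := (1 - CDF g u) / g u - u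

/-- The lower threshold `K_low` on the cost of inspection. -/
def Klow (f g : ℝ → ℝ) (αstar : ℝ → ℝ) (v : ℝ) : ℝ :=
  (∫ u in (0:ℝ)..v, (1 - CDF f (αstar u)) * (1 - CDF g u - u * g u)) /
  (∫ u in (0:ℝ)..v, (1 - CDF f (αstar u)) * g u)

/-- `f` is a continuous, strictly positive probability density on `[0, b]`. -/
structure IsDensityOn (f : ℝ → ℝ) (b : ℝ) : Prop where
  cont : ContinuousOn f (Icc 0 b)
  pos : ∀ x ∈ Icc (0:ℝ) b, 0 < f x
  supp : ∀ x, x ∉ Icc (0:ℝ) b → f x = 0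
  int_one : (∫ x in (0:ℝ)..b, f x) = 1

/-- The regulator's objective. -/
def J (abar ubar v : ℝ) (f g : ℝ → ℝ) (t : ℝ → ℝ → ℝ) (a : ℝ → ℝ → ℝ) : ℝ :=
  ∫ u in (0:ℝ)..ubar, ∫ α in (0:ℝ)..abar, f α * g u * (min v (t α u) - u) * a α u

/-- Feasibility of an allocation/inspection pair for the regulator's problem. -/
structure Feasible (abar ubar K : ℝ) (f g : ℝ → ℝ) (a c : ℝ → ℝ → ℝ) : Prop where
  meas_a : Measurable (Function.uncurry a)
  meas_c : Measurable (Function.uncurry c)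
  mem_a : ∀ α u, a α u ∈ Icc (0:ℝ) 1
  mem_c : ∀ α u, c α u ∈ Icc (0:ℝ) 1
  budget : (∫ u in (0:ℝ)..ubar, ∫ α in (0:ℝ)..abar, f α * g u * rFun g u * a α u)
      = K * ∫ u in (0:ℝ)..ubar, ∫ α in (0:ℝ)..abar, f α * g u * c α u
  ic : ∀ α u, a α u * (1 - c α u) ≤ a 0 u
  inspect : ∀ α u, c α u ≤ a α u
  u_mono : ∀ α u u', u' ≤ u → a α u ≤ a α u'
  α_mono0 : ∀ α u, a 0 u ≤ a α u

/-- Optimality for the regulator's problem. -/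
def Optimal (abar ubar v K : ℝ) (f g : ℝ → ℝ) (t : ℝ → ℝ → ℝ) (a c : ℝ → ℝ → ℝ) : Prop :=
  Feasible abar ubar K f g a c ∧
  ∀ a' c' : ℝ → ℝ → ℝ, Feasible abar ubar K f g a' c' →
    J abar ubar v f g t a' ≤ J abar ubar v f g t a

/-- The interference is `t(α,u) = α` (independent case, with `α*(u) = u`)
or `t(α,u) = α·u` (power case, with `α*(u) = 1`). -/
def InterferenceSpec (t : ℝ → ℝ → ℝ) (αstar : ℝ → ℝ) : Prop :=
  ((∀ α u, t α u = α) ∧ (∀ u, αstar u = u)) ∨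
  ((∀ α u, t α u = α * u) ∧ (∀ u, αstar u = 1))

/-!
Compare an optimal pair `(a, c)` with its truncation, which allocates nothing above `v`, where
allocating has negative net benefit. If the truncation has a nonnegative surplus, that surplus can
be burnt without lowering the objective: inspect and allocate to ever more types with positive net
benefit, then withdraw from those with negative net benefit. The end point, full inspection of the
efficient types, is in deficit precisely because `K_low ≤ K`. If the truncation is in deficit, then
`0 < r v < K`, and we price the budget by the multiplier `η ≥ 0` for which types at `u = v` are
worthless on average, `∫ (w α v + η * r v) dα = 0`. Incentive compatibility ties allocation above
`v` without inspection to the pool of all `α`, whose priced value is at most that at `u = v`; below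
`v` allocating to everybody without inspection is best. Moving the truncation towards the latter
balances the budget and lowers no Lagrangian value. In both cases optimality of `(a, c)` forces it
to coincide with its truncation.
-/

/-! ### Implementable rules -/

/-- All the feasibility constraints of the regulator's problem except the budget equation, together
with measurability and the bounds `0 ≤ a, c ≤ 1`. -/
structure Implementable (a c : ℝ → ℝ → ℝ) : Prop where
  meas_a : Measurable (Function.uncurry a)
  meas_c : Measurable (Function.uncurry c)
  mem_a : ∀ α u, a α u ∈ Icc (0 : ℝ) 1
  mem_c : ∀ α u, c α u ∈ Icc (0 : ℝ) 1
  ic : ∀ α u, a α u * (1 - c α u) ≤ a 0 u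
  inspect : ∀ α u, c α u ≤ a α u
  u_mono : ∀ α u u', u' ≤ u → a α u ≤ a α u'
  α_mono0 : ∀ α u, a 0 u ≤ a α u

/-- The rule that follows `a` on types with `u ≤ s` and `b` on types with `u > s`. -/
def splice (s : ℝ) (a b : ℝ → ℝ → ℝ) : ℝ → ℝ → ℝ :=
  fun α u => if u ≤ s then a α u else b α u

/-- The rule `a` shut down on all types with `u > s`. -/
def truncate (s : ℝ) (a : ℝ → ℝ → ℝ) : ℝ → ℝ → ℝ := splice s a 0

open Classical in
/-- The rule `a` raised to its maximal value `1` on the set of types `S`. -/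
def raiseOn (S : Set (ℝ × ℝ)) (a : ℝ → ℝ → ℝ) : ℝ → ℝ → ℝ :=
  fun α u => if (α, u) ∈ S then 1 else a α u

/-- Sets of types on which allocation and inspection can be raised to `1` while keeping all
constraints but the budget: inspected types have `α ≠ 0`, and the set is downward closed in `u`. -/
structure Inspectable (S : Set (ℝ × ℝ)) : Prop where
  measurableSet : MeasurableSet S
  zero_notMem : ∀ u, (0, u) ∉ S
  mem_of_le : ∀ α u u', u' ≤ u → (α, u) ∈ S → (α, u') ∈ S

lemma measurable_splice (s : ℝ) {a b : ℝ → ℝ → ℝ} (ha : Measurable (Function.uncurry a))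
    (hb : Measurable (Function.uncurry b)) : Measurable (Function.uncurry (splice s a b)) :=
  Measurable.ite (measurableSet_le measurable_snd measurable_const) ha hb

lemma measurable_raiseOn {S : Set (ℝ × ℝ)} (hS : MeasurableSet S) {a : ℝ → ℝ → ℝ}
    (ha : Measurable (Function.uncurry a)) : Measurable (Function.uncurry (raiseOn S a)) :=
  Measurable.ite hS measurable_const ha

namespace Implementable

variable {a b c d : ℝ → ℝ → ℝ}

lemma zero : Implementable 0 0 where
  meas_a := measurable_const
  meas_c := measurable_const
  mem_a _ _ := by simp
  mem_c _ _ := by simp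
  ic _ _ := by simp
  inspect _ _ := le_rfl
  u_mono _ _ _ _ := le_rfl
  α_mono0 _ _ := le_rfl

lemma full : Implementable 1 0 where
  meas_a := measurable_const
  meas_c := measurable_const
  mem_a _ _ := by simp
  mem_c _ _ := by simp
  ic _ _ := by simp
  inspect _ _ := by simp
  u_mono _ _ _ _ := le_rfl
  α_mono0 _ _ := le_rfl

lemma sub_le_inspection (h : Implementable a c) (α u : ℝ) : a α u - a 0 u ≤ c α u := by
  nlinarith [h.ic α u, (h.mem_a α u).2, (h.mem_c α u).1]

lemma splice (ha : Implementable a c) (hb : Implementable b d) (hba : b ≤ a) (s : ℝ) :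
    Implementable (splice s a b) (splice s c d) where
  meas_a := measurable_splice s ha.meas_a hb.meas_a
  meas_c := measurable_splice s ha.meas_c hb.meas_c
  mem_a α u := by unfold Spectrum.splice; split_ifs <;> simp only [ha.mem_a, hb.mem_a]
  mem_c α u := by unfold Spectrum.splice; split_ifs <;> simp only [ha.mem_c, hb.mem_c]
  ic α u := by unfold Spectrum.splice; split_ifs <;> simp only [ha.ic, hb.ic]
  inspect α u := by unfold Spectrum.splice; split_ifs <;> simp only [ha.inspect, hb.inspect]
  u_mono α u u' huu' := by
    unfold Spectrum.splice
    split_ifs with hu hu' hu'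
    · exact ha.u_mono α u u' huu'
    · exact absurd (huu'.trans hu) hu'
    · exact (hb.u_mono α u u' huu').trans (hba α u')
    · exact hb.u_mono α u u' huu'
  α_mono0 α u := by unfold Spectrum.splice; split_ifs <;> simp only [ha.α_mono0, hb.α_mono0]

lemma truncate (h : Implementable a c) (s : ℝ) : Implementable (truncate s a) (truncate s c) :=
  h.splice zero (fun α u => (h.mem_a α u).1) s

lemma truncate_le_truncate_one (h : Implementable a c) (s : ℝ) :
    Spectrum.truncate s a ≤ Spectrum.truncate s 1 := fun α u => by
  unfold Spectrum.truncate Spectrum.splice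
  split_ifs
  exacts [(h.mem_a α u).2, le_rfl]

lemma raiseOn {S : Set (ℝ × ℝ)} (hS : Inspectable S) (h : Implementable a c) :
    Implementable (raiseOn S a) (raiseOn S c) where
  meas_a := measurable_raiseOn hS.measurableSet h.meas_a
  meas_c := measurable_raiseOn hS.measurableSet h.meas_c
  mem_a α u := by
    unfold Spectrum.raiseOn
    split_ifs
    exacts [⟨zero_le_one, le_rfl⟩, h.mem_a α u]
  mem_c α u := by
    unfold Spectrum.raiseOn
    split_ifs
    exacts [⟨zero_le_one, le_rfl⟩, h.mem_c α u]
  ic α u := by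
    simp only [Spectrum.raiseOn, hS.zero_notMem u, if_false]
    split_ifs
    · simpa using (h.mem_a 0 u).1
    · exact h.ic α u
  inspect α u := by unfold Spectrum.raiseOn; split_ifs <;> simp only [le_rfl, h.inspect]
  u_mono α u u' huu' := by
    unfold Spectrum.raiseOn
    split_ifs with hu hu' hu'
    · exact le_rfl
    · exact absurd (hS.mem_of_le α u u' huu' hu) hu'
    · exact (h.mem_a α u).2
    · exact h.u_mono α u u' huu'
  α_mono0 α u := by
    simp only [Spectrum.raiseOn, hS.zero_notMem u, if_false]
    split_ifs
    · exact (h.mem_a 0 u).2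
    · exact h.α_mono0 α u

end Implementable

/-! ### Balancing the budget -/

/-- The expected value, for types drawn from `Q`, of the allocation `a` weighted by `w`, net of a
cost `K` per unit of inspection `c`. The objective (`K = 0`), the budget surplus and their
Lagrangian combinations are all of this form. -/
def netValue (Q : Measure (ℝ × ℝ)) (w : ℝ → ℝ → ℝ) (K : ℝ) (a c : ℝ → ℝ → ℝ) : ℝ :=
  ∫ p, w p.1 p.2 * a p.1 p.2 - K * c p.1 p.2 ∂Q

lemma integrable_mul_of_mem_Icc {X : Type*} [MeasurableSpace X] {μ : Measure X} {φ k : X → ℝ}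
    (hφ : Integrable φ μ) (hk : Measurable k) (hk01 : ∀ x, k x ∈ Icc (0 : ℝ) 1) :
    Integrable (fun x => φ x * k x) μ :=
  hφ.mul_bdd (c := 1) hk.aestronglyMeasurable <| .of_forall fun x => by
    rw [Real.norm_of_nonneg (hk01 x).1]
    exact (hk01 x).2

lemma continuous_integral_ite_le {X : Type*} [MeasurableSpace X] {μ : Measure X} {h φ ψ : X → ℝ}
    (hh : Measurable h) (hnull : ∀ s, ∀ᵐ x ∂μ, h x ≠ s) (hφ : Integrable φ μ)
    (hψ : Integrable ψ μ) : Continuous fun s => ∫ x, if h x ≤ s then φ x else ψ x ∂μ := by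
  classical
  rw [continuous_iff_continuousAt]
  intro s
  refine continuousAt_of_dominated (bound := fun x => ‖φ x‖ + ‖ψ x‖) (.of_forall fun s' => ?_)
    (.of_forall fun s' => .of_forall fun x => ?_) (hφ.norm.add hψ.norm) ?_
  · exact (Integrable.piecewise (measurableSet_le hh measurable_const) hφ.integrableOn
      hψ.integrableOn).aestronglyMeasurable
  · split_ifs <;> simp
  · filter_upwards [hnull s] with x hx
    rcases lt_or_gt_of_ne hx with hlt | hgt
    · refine continuousAt_const (y := φ x) |>.congr ?_
      filter_upwards [lt_mem_nhds hlt] with y hy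
      rw [if_pos hy.le]
    · refine continuousAt_const (y := ψ x) |>.congr ?_
      filter_upwards [gt_mem_nhds hgt] with y hy
      rw [if_neg hy.not_ge]

section Balancing

variable {Q : Measure (ℝ × ℝ)} {w r : ℝ → ℝ → ℝ} {K ubar : ℝ} {a b c d : ℝ → ℝ → ℝ}

lemma Implementable.integrable_netValue [IsFiniteMeasure Q] (h : Implementable a c)
    (hw : Integrable (Function.uncurry w) Q) (K : ℝ) :
    Integrable (fun p => w p.1 p.2 * a p.1 p.2 - K * c p.1 p.2) Q :=
  (integrable_mul_of_mem_Icc hw h.meas_a fun p => h.mem_a p.1 p.2).sub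
    (integrable_mul_of_mem_Icc (integrable_const K) h.meas_c fun p => h.mem_c p.1 p.2)

lemma netValue_splice (Q : Measure (ℝ × ℝ)) (w : ℝ → ℝ → ℝ) (K s : ℝ) (a b c d : ℝ → ℝ → ℝ) :
    netValue Q w K (splice s a b) (splice s c d) =
      ∫ p, if p.2 ≤ s then w p.1 p.2 * a p.1 p.2 - K * c p.1 p.2
        else w p.1 p.2 * b p.1 p.2 - K * d p.1 p.2 ∂Q := by
  refine integral_congr_ae (.of_forall fun p => ?_)
  simp only [splice]
  split_ifs <;> rfl

lemma exists_netValue_splice_eq_zero [IsFiniteMeasure Q] (hQ : ∀ᵐ p ∂Q, p.2 ∈ Ioc 0 ubar)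
    (hnull : ∀ s, ∀ᵐ p ∂Q, p.2 ≠ s) (hr : Integrable (Function.uncurry r) Q)
    (ha : Implementable a c) (hb : Implementable b d)
    (h0 : 0 ∈ uIcc (netValue Q r K b d) (netValue Q r K a c)) :
    ∃ s, netValue Q r K (splice s a b) (splice s c d) = 0 := by
  have hcont := continuous_integral_ite_le measurable_snd hnull (ha.integrable_netValue hr K)
    (hb.integrable_netValue hr K)
  simp only [← netValue_splice] at hcont
  have hleft : netValue Q r K (splice 0 a b) (splice 0 c d) = netValue Q r K b d := by
    rw [netValue_splice]
    refine integral_congr_ae ?_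
    filter_upwards [hQ] with p hp
    rw [if_neg hp.1.not_ge]
  have hright : netValue Q r K (splice ubar a b) (splice ubar c d) = netValue Q r K a c := by
    rw [netValue_splice]
    refine integral_congr_ae ?_
    filter_upwards [hQ] with p hp
    rw [if_pos hp.2]
  rw [← hleft, ← hright] at h0
  obtain ⟨s, -, hs⟩ := intermediate_value_uIcc hcont.continuousOn h0
  exact ⟨s, hs⟩

lemma netValue_le_splice [IsFiniteMeasure Q] {x y : ℝ → ℝ → ℝ} (hx : Implementable x y)
    (ha : Implementable a c) (hb : Implementable b d) (hba : b ≤ a)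
    (hw : Integrable (Function.uncurry w) Q)
    (hxa : ∀ᵐ p ∂Q, w p.1 p.2 * x p.1 p.2 ≤ w p.1 p.2 * a p.1 p.2)
    (hxb : ∀ᵐ p ∂Q, w p.1 p.2 * x p.1 p.2 ≤ w p.1 p.2 * b p.1 p.2) (s : ℝ) :
    netValue Q w 0 x y ≤ netValue Q w 0 (splice s a b) (splice s c d) := by
  refine integral_mono_ae (hx.integrable_netValue hw 0)
    ((ha.splice hb hba s).integrable_netValue hw 0) ?_
  filter_upwards [hxa, hxb] with p hpa hpb
  simp only [splice, zero_mul, sub_zero]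
  split_ifs <;> assumption

-- Raise `(a, c)` to `1` on `S`, type by type, and then shut it down off `S`. Neither move lowers
-- the objective, and the surplus, which ends nonpositive, vanishes somewhere along the way.
lemma exists_balanced_of_netValue_nonneg [IsFiniteMeasure Q]
    (hQ : ∀ᵐ p ∂Q, p.2 ∈ Ioc 0 ubar) (hnull : ∀ s, ∀ᵐ p ∂Q, p.2 ≠ s)
    (hw : Integrable (Function.uncurry w) Q) (hr : Integrable (Function.uncurry r) Q)
    {S : Set (ℝ × ℝ)} (hS : Inspectable S) (hwS : ∀ᵐ p ∂Q, p ∈ S → 0 ≤ w p.1 p.2)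
    (hwSc : ∀ᵐ p ∂Q, p ∉ S → w p.1 p.2 ≤ 0)
    (heff : netValue Q r K (raiseOn S 0) (raiseOn S 0) ≤ 0)
    (h : Implementable a c) (hac : 0 ≤ netValue Q r K a c) :
    ∃ a' c', Implementable a' c' ∧ netValue Q r K a' c' = 0 ∧
      netValue Q w 0 a c ≤ netValue Q w 0 a' c' := by
  have hraise : Implementable (raiseOn S a) (raiseOn S c) := h.raiseOn hS
  have hefficient : Implementable (raiseOn S 0) (raiseOn S 0) := Implementable.zero.raiseOn hS
  have hle_raise : a ≤ raiseOn S a := fun α u => by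
    unfold raiseOn
    split_ifs
    exacts [(h.mem_a α u).2, le_rfl]
  have hefficient_le : raiseOn S 0 ≤ raiseOn S a := fun α u => by
    unfold raiseOn
    split_ifs
    exacts [le_rfl, (h.mem_a α u).1]
  have hw_raise : ∀ᵐ p ∂Q, w p.1 p.2 * a p.1 p.2 ≤ w p.1 p.2 * raiseOn S a p.1 p.2 := by
    filter_upwards [hwS] with p hp
    simp only [raiseOn]
    split_ifs with hpS
    exacts [mul_le_mul_of_nonneg_left (h.mem_a _ _).2 (hp hpS), le_rfl]
  have hw_efficient : ∀ᵐ p ∂Q, w p.1 p.2 * a p.1 p.2 ≤ w p.1 p.2 * raiseOn S 0 p.1 p.2 := by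
    filter_upwards [hwS, hwSc] with p hp hpc
    simp only [raiseOn]
    split_ifs with hpS
    · exact mul_le_mul_of_nonneg_left (h.mem_a _ _).2 (hp hpS)
    · simpa using mul_nonpos_of_nonpos_of_nonneg (hpc hpS) (h.mem_a p.1 p.2).1
  rcases le_total 0 (netValue Q r K (raiseOn S a) (raiseOn S c)) with hpos | hneg
  · obtain ⟨s, hs⟩ := exists_netValue_splice_eq_zero hQ hnull hr hraise hefficient
      (Icc_subset_uIcc ⟨heff, hpos⟩)
    exact ⟨_, _, hraise.splice hefficient hefficient_le s, hs,
      netValue_le_splice h hraise hefficient hefficient_le hw hw_raise hw_efficient s⟩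
  · obtain ⟨s, hs⟩ := exists_netValue_splice_eq_zero hQ hnull hr hraise h
      (Icc_subset_uIcc' ⟨hneg, hac⟩)
    exact ⟨_, _, hraise.splice h hle_raise s, hs,
      netValue_le_splice h hraise h hle_raise hw hw_raise (.of_forall fun _ => le_rfl) s⟩

end Balancing

/-! ### The Lagrangian argument -/

lemma ae_eq_of_integral_le {X : Type*} [MeasurableSpace X] {μ : Measure X} {φ ψ : X → ℝ}
    (hφ : Integrable φ μ) (hψ : Integrable ψ μ) (hle : φ ≤ᵐ[μ] ψ)
    (hint : ∫ x, ψ x ∂μ ≤ ∫ x, φ x ∂μ) : φ =ᵐ[μ] ψ :=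
  (integral_eq_iff_of_ae_le hφ hψ hle).1 (le_antisymm (integral_mono_ae hφ hψ hle) hint)

lemma indicator_mem_Icc_zero_one {X : Type*} {S : Set X} {k : X → ℝ}
    (hk : ∀ x ∈ S, k x ∈ Icc (0 : ℝ) 1) (x : X) : S.indicator k x ∈ Icc (0 : ℝ) 1 := by
  classical
  rw [indicator_apply]
  split_ifs with hx
  exacts [hk x hx, ⟨le_rfl, zero_le_one⟩]

lemma ae_snd_ne {A U : Measure ℝ} [NullSingletonClass U] (s : ℝ) : ∀ᵐ p ∂A.prod U, p.2 ≠ s :=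
  Measure.quasiMeasurePreserving_snd.ae (Measure.ae_ne U s)

lemma netValue_lagrangian {Q : Measure (ℝ × ℝ)} [IsFiniteMeasure Q] {w r a c : ℝ → ℝ → ℝ}
    (h : Implementable a c) (hw : Integrable (Function.uncurry w) Q)
    (hr : Integrable (Function.uncurry r) Q) (K η : ℝ) :
    netValue Q (fun α u => w α u + η * r α u) (η * K) a c =
      netValue Q w 0 a c + η * netValue Q r K a c := by
  unfold netValue
  rw [← integral_const_mul, ← integral_add (h.integrable_netValue hw 0)
    ((h.integrable_netValue hr K).const_mul η)]
  exact integral_congr_ae (.of_forall fun p => by ring)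

/-- A screening problem with types drawn from `A.prod U`, in which allocating to a type `(α, u)` has
value `w α u` and revenue `r u`. The value is negative above the threshold `v`, its ratio to `u` is
nonincreasing in `u`, and so is the revenue. -/
structure IsRegularProblem (A U : Measure ℝ) (v ubar : ℝ) (w : ℝ → ℝ → ℝ) (r : ℝ → ℝ) : Prop where
  mem_Ioc : v ∈ Ioc 0 ubar
  ae_pos : ∀ᵐ α ∂A, 0 < α
  ae_mem_Ioc : ∀ᵐ u ∂U, u ∈ Ioc 0 ubar
  integrable_value : Integrable (Function.uncurry w) (A.prod U)
  integrable_value_threshold : Integrable (fun α => w α v) A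
  integrable_revenue : Integrable r U
  antitoneOn_revenue : AntitoneOn r (Ioc 0 ubar)
  value_threshold_nonpos : ∀ α, w α v ≤ 0
  value_neg : ∀ α u, v < u → w α u < 0
  antitoneOn_ratio : ∀ α, 0 < α → AntitoneOn (fun u => w α u / u) (Ioi 0)

namespace IsRegularProblem

variable {A U : Measure ℝ} {v ubar K η : ℝ} {w : ℝ → ℝ → ℝ} {r : ℝ → ℝ} {a c : ℝ → ℝ → ℝ}
  {α u : ℝ}

lemma value_lt_value_threshold (P : IsRegularProblem A U v ubar w r) (hα : 0 < α) (hu : v < u) :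
    w α u < w α v := by
  have hv : 0 < v := P.mem_Ioc.1
  have hratio : w α u / u ≤ w α v / v := P.antitoneOn_ratio α hα hv (hv.trans hu) hu.le
  rw [div_le_div_iff₀ (hv.trans hu) hv] at hratio
  rcases (P.value_threshold_nonpos α).eq_or_lt with hzero | hneg
  · exact hzero ▸ P.value_neg α u hu
  · nlinarith

lemma ratio_mul_value_threshold_le (P : IsRegularProblem A U v ubar w r) (hα : 0 < α) (hu : 0 < u)
    (huv : u ≤ v) : u / v * w α v ≤ w α u := by
  have hv : 0 < v := P.mem_Ioc.1
  have hratio : w α v / v ≤ w α u / u := P.antitoneOn_ratio α hα hu hv huv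
  rwa [le_div_iff₀ hu, div_mul_comm] at hratio

-- Allocating beyond `a 0 u` forces `c ≥ a - a 0`, which costs `K` per unit and earns at most
-- `r u ≤ r v ≤ K`.
lemma lagrangian_lt (P : IsRegularProblem A U v ubar w r) (hK : 0 ≤ K) (hη : 0 ≤ η) (hrv : r v ≤ K)
    (h : Implementable a c) (hα : 0 < α) (hu : u ∈ Ioc v ubar) (ha : 0 < a α u) :
    (w α u + η * r u) * a α u - η * K * c α u < (w α v + η * r v) * a 0 u := by
  have hv := P.mem_Ioc
  have hr : r u ≤ r v := P.antitoneOn_revenue hv ⟨hv.1.trans hu.1, hu.2⟩ hu.1.le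
  have hmono : 0 ≤ a α u - a 0 u := sub_nonneg.2 (h.α_mono0 α u)
  have hvalue : w α u * a α u < w α v * a 0 u := by
    nlinarith [P.value_lt_value_threshold hα hu.1, P.value_threshold_nonpos α]
  have hsurplus : r u * a α u - K * c α u ≤ r v * a 0 u := by
    nlinarith [h.sub_le_inspection α u]
  nlinarith [mul_le_mul_of_nonneg_left hsurplus hη]

lemma lagrangian_le (P : IsRegularProblem A U v ubar w r) (hK : 0 ≤ K) (hη : 0 ≤ η) (hrv : r v ≤ K)
    (h : Implementable a c) (hα : 0 < α) (hu : u ∈ Ioc v ubar) :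
    (w α u + η * r u) * a α u - η * K * c α u ≤ (w α v + η * r v) * a 0 u := by
  rcases (h.mem_a α u).1.eq_or_lt with hzero | hpos
  · have hc : c α u = 0 := le_antisymm (hzero ▸ h.inspect α u) (h.mem_c α u).1
    have ha : a 0 u = 0 := le_antisymm (hzero ▸ h.α_mono0 α u) (h.mem_a 0 u).1
    simp [← hzero, hc, ha]
  · exact (P.lagrangian_lt hK hη hrv h hα hu hpos).le

lemma lagrangian_add_le (P : IsRegularProblem A U v ubar w r) (hK : 0 ≤ K) (hη : 0 ≤ η)
    (hrv₀ : 0 ≤ r v) (hrv : r v ≤ K) (h : Implementable a c) (hα : 0 < α) (hu : 0 < u)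
    (huv : u ≤ v) :
    (w α u + η * r u) * a α u - η * K * c α u + (w α v + η * r v) * (u / v * (1 - a 0 u)) ≤
      w α u + η * r u := by
  -- `ζ` bounds both the gain from a unit of allocation and the savings from a unit of inspection.
  set ζ := u / v * (w α v + η * r v)
  have hv := P.mem_Ioc
  have hratio₀ : 0 ≤ u / v := div_nonneg hu.le hv.1.le
  have hratio₁ : u / v ≤ 1 := (div_le_one hv.1).2 huv
  have hr : r v ≤ r u := P.antitoneOn_revenue ⟨hu, huv.trans hv.2⟩ hv huv
  have hrevenue : u / v * (η * r v) ≤ η * r v :=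
    mul_le_of_le_one_left (mul_nonneg hη hrv₀) hratio₁
  have hζ_gain : ζ ≤ w α u + η * r u := by
    linarith [P.ratio_mul_value_threshold_le hα hu huv, mul_le_mul_of_nonneg_left hr hη]
  have hζ_cost : ζ ≤ η * K := by
    linarith [mul_nonpos_of_nonneg_of_nonpos hratio₀ (P.value_threshold_nonpos α),
      mul_le_mul_of_nonneg_left hrv hη]
  have hgain := mul_le_mul_of_nonneg_right hζ_gain (sub_nonneg.2 (h.mem_a α u).2)
  have hcost := mul_le_mul_of_nonneg_right hζ_cost (sub_nonneg.2 (h.α_mono0 α u))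
  have hinspect := mul_le_mul_of_nonneg_left (h.sub_le_inspection α u) (mul_nonneg hη hK)
  linarith

lemma ae_mem (P : IsRegularProblem A U v ubar w r) :
    ∀ᵐ p ∂A.prod U, 0 < p.1 ∧ p.2 ∈ Ioc 0 ubar :=
  (Measure.quasiMeasurePreserving_fst.ae P.ae_pos).and
    (Measure.quasiMeasurePreserving_snd.ae P.ae_mem_Ioc)

lemma revenue_threshold_lt (P : IsRegularProblem A U v ubar w r) (hK : 0 ≤ K)
    (h : Implementable a c)
    (hneg : netValue (A.prod U) (fun _ u => r u) K (truncate v a) (truncate v c) < 0) :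
    r v < K := by
  contrapose! hneg
  refine integral_nonneg_of_ae ?_
  filter_upwards [P.ae_mem] with p hp
  simp only [truncate, splice]
  split_ifs with hpv
  · have hr : K ≤ r p.2 := hneg.trans (P.antitoneOn_revenue hp.2 P.mem_Ioc hpv)
    exact sub_nonneg.2 <| mul_le_mul hr (h.inspect _ _) (h.mem_c _ _).1 (hK.trans hr)
  · simp

lemma netValue_truncate_full_nonneg (P : IsRegularProblem A U v ubar w r) (hrv : 0 ≤ r v) :
    0 ≤ netValue (A.prod U) (fun _ u => r u) K (truncate v 1) (truncate v 0) := by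
  refine integral_nonneg_of_ae ?_
  filter_upwards [P.ae_mem] with p hp
  simp only [truncate, splice]
  split_ifs with hpv
  · simpa using hrv.trans (P.antitoneOn_revenue hp.2 P.mem_Ioc hpv)
  · simp

lemma exists_multiplier [IsProbabilityMeasure A] (P : IsRegularProblem A U v ubar w r)
    (hrv : 0 < r v) : ∃ η, 0 ≤ η ∧ ∫ α, w α v + η * r v ∂A = 0 := by
  refine ⟨-(∫ α, w α v ∂A) / r v,
    div_nonneg (neg_nonneg.2 (integral_nonpos P.value_threshold_nonpos)) hrv.le, ?_⟩
  rw [integral_add P.integrable_value_threshold (integrable_const _), integral_const,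
    probReal_univ, one_smul, div_mul_cancel₀ _ hrv.ne', add_neg_cancel]

section Integrated

variable [IsFiniteMeasure A] [IsFiniteMeasure U]

lemma integrable_revenue_prod (P : IsRegularProblem A U v ubar w r) :
    Integrable (Function.uncurry fun _ u => r u) (A.prod U) :=
  P.integrable_revenue.comp_snd A

lemma revenue_threshold_pos (P : IsRegularProblem A U v ubar w r) (hK : 0 ≤ K)
    (h : Implementable a c)
    (hlt : netValue (A.prod U) (fun _ u => r u) K (truncate v a) (truncate v c) <
      netValue (A.prod U) (fun _ u => r u) K a c) : 0 < r v := by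
  contrapose! hlt
  refine integral_mono_ae (h.integrable_netValue P.integrable_revenue_prod K)
    ((h.truncate v).integrable_netValue P.integrable_revenue_prod K) ?_
  filter_upwards [P.ae_mem] with p hp
  simp only [truncate, splice]
  split_ifs with hpv
  · exact le_rfl
  · have hr : r p.2 ≤ 0 := (P.antitoneOn_revenue P.mem_Ioc hp.2 (not_le.1 hpv).le).trans hlt
    simpa using (mul_nonpos_of_nonpos_of_nonneg hr (h.mem_a p.1 p.2).1).trans
      (mul_nonneg hK (h.mem_c p.1 p.2).1)

lemma integral_threshold_mul_eq_zero (hmean : ∫ α, w α v + η * r v ∂A = 0) (k : ℝ → ℝ) :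
    ∫ p : ℝ × ℝ, (w p.1 v + η * r v) * k p.2 ∂A.prod U = 0 := by
  rw [integral_prod_mul (fun α => w α v + η * r v) k, hmean, zero_mul]

lemma integrable_threshold_mul (P : IsRegularProblem A U v ubar w r) {k : ℝ → ℝ} (η : ℝ)
    (hk : Measurable k) (hk01 : ∀ u, k u ∈ Icc (0 : ℝ) 1) :
    Integrable (fun p : ℝ × ℝ => (w p.1 v + η * r v) * k p.2) (A.prod U) :=
  integrable_mul_of_mem_Icc
    ((P.integrable_value_threshold.add (integrable_const (η * r v))).comp_fst U)
    (hk.comp measurable_snd) fun p => hk01 p.2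

lemma integrable_lagrangian (P : IsRegularProblem A U v ubar w r) (h : Implementable a c)
    (K η : ℝ) : Integrable
      (fun p => (w p.1 p.2 + η * r p.2) * a p.1 p.2 - η * K * c p.1 p.2) (A.prod U) :=
  h.integrable_netValue (w := fun α u => w α u + η * r u)
    (P.integrable_value.add (P.integrable_revenue_prod.const_mul η)) _

lemma ae_eq_zero_of_lagrangian_le (P : IsRegularProblem A U v ubar w r) (hK : 0 ≤ K) (hη : 0 ≤ η)
    (hrv : r v ≤ K) (hmean : ∫ α, w α v + η * r v ∂A = 0) (h : Implementable a c)
    (hle : netValue (A.prod U) (fun α u => w α u + η * r u) (η * K) (truncate v a) (truncate v c) ≤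
      netValue (A.prod U) (fun α u => w α u + η * r u) (η * K) a c) :
    ∀ᵐ p ∂A.prod U, v < p.2 → a p.1 p.2 = 0 := by
  set k : ℝ → ℝ := (Ioi v).indicator (a 0)
  have hk : Measurable k := h.meas_a.of_uncurry_left.indicator measurableSet_Ioi
  have hk01 : ∀ u, k u ∈ Icc (0 : ℝ) 1 := indicator_mem_Icc_zero_one fun u _ => h.mem_a 0 u
  have htrunc := P.integrable_lagrangian (h.truncate v) K η
  have hthreshold := P.integrable_threshold_mul η hk hk01
  have hbound : (fun p => (w p.1 p.2 + η * r p.2) * a p.1 p.2 - η * K * c p.1 p.2)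
      ≤ᵐ[A.prod U] fun p => ((w p.1 p.2 + η * r p.2) * truncate v a p.1 p.2 -
        η * K * truncate v c p.1 p.2) + (w p.1 v + η * r v) * k p.2 := by
    filter_upwards [P.ae_mem] with p hp
    rcases le_or_gt p.2 v with hpv | hpv
    · simp [truncate, splice, k, hpv]
    · simpa [truncate, splice, k, hpv, hpv.not_ge] using
        P.lagrangian_le hK hη hrv h hp.1 ⟨hpv, hp.2.2⟩
  have heq := ae_eq_of_integral_le (P.integrable_lagrangian h K η) (htrunc.add hthreshold) hbound
    (by rwa [integral_add' htrunc hthreshold, integral_threshold_mul_eq_zero hmean, add_zero])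
  filter_upwards [heq, P.ae_mem] with p hpeq hp hpv
  by_contra hne
  have hlt := P.lagrangian_lt hK hη hrv h hp.1 ⟨hpv, hp.2.2⟩ ((h.mem_a _ _).1.lt_of_ne' hne)
  exact hlt.ne (by simpa [truncate, splice, k, hpv, hpv.not_ge] using hpeq)

lemma lagrangian_truncate_le_splice (P : IsRegularProblem A U v ubar w r) (hK : 0 ≤ K)
    (hη : 0 ≤ η) (hrv₀ : 0 ≤ r v) (hrv : r v ≤ K) (hmean : ∫ α, w α v + η * r v ∂A = 0)
    (h : Implementable a c) (s : ℝ) :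
    netValue (A.prod U) (fun α u => w α u + η * r u) (η * K) (truncate v a) (truncate v c) ≤
      netValue (A.prod U) (fun α u => w α u + η * r u) (η * K)
        (splice s (truncate v 1) (truncate v a)) (splice s (truncate v 0) (truncate v c)) := by
  set k : ℝ → ℝ := (Ioc 0 (min s v)).indicator fun u => u / v * (1 - a 0 u)
  have hv : 0 < v := P.mem_Ioc.1
  have hk : Measurable k := ((measurable_id.div_const v).mul
    (measurable_const.sub h.meas_a.of_uncurry_left)).indicator measurableSet_Ioc
  have hk01 : ∀ u, k u ∈ Icc (0 : ℝ) 1 := indicator_mem_Icc_zero_one fun u hu => by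
    have ha := h.mem_a 0 u
    have hratio₀ : 0 ≤ u / v := div_nonneg hu.1.le hv.le
    have hratio₁ : u / v ≤ 1 := (div_le_one hv).2 (hu.2.trans (min_le_right s v))
    exact ⟨mul_nonneg hratio₀ (sub_nonneg.2 ha.2),
      mul_le_one₀ hratio₁ (sub_nonneg.2 ha.2) (sub_le_self 1 ha.1)⟩
  have htrunc := P.integrable_lagrangian (h.truncate v) K η
  have hthreshold := P.integrable_threshold_mul η hk hk01
  calc
    _ = ∫ p, ((w p.1 p.2 + η * r p.2) * truncate v a p.1 p.2 -
        η * K * truncate v c p.1 p.2) + (w p.1 v + η * r v) * k p.2 ∂A.prod U := by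
      rw [integral_add htrunc hthreshold, integral_threshold_mul_eq_zero hmean, add_zero, netValue]
    _ ≤ _ := by
      have hsplice := (Implementable.full.truncate v).splice (h.truncate v)
        (h.truncate_le_truncate_one v) s
      refine integral_mono_ae (htrunc.add hthreshold) (P.integrable_lagrangian hsplice K η) ?_
      filter_upwards [P.ae_mem] with p hp
      by_cases hps : p.2 ≤ s <;> by_cases hpv : p.2 ≤ v
      · simpa [truncate, splice, k, hps, hpv, hp.2.1] using
          P.lagrangian_add_le hK hη hrv₀ hrv h hp.1 hp.2.1 hpv
      all_goals simp [truncate, splice, k, hps, hpv]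

lemma exists_balanced_lagrangian_truncate_le [NullSingletonClass U]
    (P : IsRegularProblem A U v ubar w r) (hK : 0 ≤ K) (hη : 0 ≤ η) (hrv₀ : 0 ≤ r v)
    (hrv : r v ≤ K) (hmean : ∫ α, w α v + η * r v ∂A = 0) (h : Implementable a c)
    (hneg : netValue (A.prod U) (fun _ u => r u) K (truncate v a) (truncate v c) ≤ 0) :
    ∃ a' c', Implementable a' c' ∧ netValue (A.prod U) (fun _ u => r u) K a' c' = 0 ∧
      netValue (A.prod U) (fun α u => w α u + η * r u) (η * K) (truncate v a) (truncate v c) ≤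
        netValue (A.prod U) w 0 a' c' := by
  have hfull := Implementable.full.truncate v
  obtain ⟨s, hs⟩ := exists_netValue_splice_eq_zero (Measure.quasiMeasurePreserving_snd.ae
    P.ae_mem_Ioc) ae_snd_ne P.integrable_revenue_prod hfull (h.truncate v)
    (Icc_subset_uIcc ⟨hneg, P.netValue_truncate_full_nonneg hrv₀⟩)
  have hsplice := hfull.splice (h.truncate v) (h.truncate_le_truncate_one v) s
  refine ⟨_, _, hsplice, hs, ?_⟩
  have hle := P.lagrangian_truncate_le_splice hK hη hrv₀ hrv hmean h s
  rwa [netValue_lagrangian hsplice P.integrable_value P.integrable_revenue_prod, hs, mul_zero,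
    add_zero] at hle

lemma ae_eq_zero_of_netValue_le_truncate (P : IsRegularProblem A U v ubar w r)
    (h : Implementable a c)
    (hle : netValue (A.prod U) w 0 (truncate v a) (truncate v c) ≤ netValue (A.prod U) w 0 a c) :
    ∀ᵐ p ∂A.prod U, v < p.2 → a p.1 p.2 = 0 := by
  have heq := ae_eq_of_integral_le (h.integrable_netValue P.integrable_value 0)
    ((h.truncate v).integrable_netValue P.integrable_value 0) (.of_forall fun p => ?_) hle
  · filter_upwards [heq] with p hp hpv
    exact (mul_eq_zero.1 (by simpa [truncate, splice, hpv.not_ge] using hp)).resolve_left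
      (P.value_neg p.1 p.2 hpv).ne
  · rcases le_or_gt p.2 v with hpv | hpv
    · simp [truncate, splice, hpv]
    · simpa [truncate, splice, hpv.not_ge] using
        mul_nonpos_of_nonpos_of_nonneg (P.value_neg p.1 p.2 hpv).le (h.mem_a p.1 p.2).1

end Integrated

theorem ae_eq_zero_above [IsProbabilityMeasure A] [IsFiniteMeasure U] [NullSingletonClass U]
    (P : IsRegularProblem A U v ubar w r) (hK : 0 ≤ K) {S : Set (ℝ × ℝ)} (hS : Inspectable S)
    (hwS : ∀ᵐ p ∂A.prod U, p ∈ S → 0 ≤ w p.1 p.2)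
    (hwSc : ∀ᵐ p ∂A.prod U, p ∉ S → w p.1 p.2 ≤ 0)
    (heff : netValue (A.prod U) (fun _ u => r u) K (raiseOn S 0) (raiseOn S 0) ≤ 0)
    (h : Implementable a c) (hbal : netValue (A.prod U) (fun _ u => r u) K a c = 0)
    (hopt : ∀ a' c', Implementable a' c' → netValue (A.prod U) (fun _ u => r u) K a' c' = 0 →
      netValue (A.prod U) w 0 a' c' ≤ netValue (A.prod U) w 0 a c) :
    ∀ᵐ p ∂A.prod U, v < p.2 → a p.1 p.2 = 0 := by
  rcases le_or_gt 0 (netValue (A.prod U) (fun _ u => r u) K (truncate v a) (truncate v c))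
    with hnonneg | hneg
  · obtain ⟨a', c', h', hbal', hle⟩ := exists_balanced_of_netValue_nonneg
      (Measure.quasiMeasurePreserving_snd.ae P.ae_mem_Ioc) ae_snd_ne P.integrable_value
      P.integrable_revenue_prod hS hwS hwSc heff (h.truncate v) hnonneg
    exact P.ae_eq_zero_of_netValue_le_truncate h (hle.trans (hopt a' c' h' hbal'))
  · have hrv₀ : 0 < r v := P.revenue_threshold_pos hK h (hbal.symm ▸ hneg)
    have hrv : r v ≤ K := (P.revenue_threshold_lt hK h hneg).le
    obtain ⟨η, hη, hmean⟩ := P.exists_multiplier hrv₀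
    obtain ⟨a', c', h', hbal', hle⟩ :=
      P.exists_balanced_lagrangian_truncate_le hK hη hrv₀.le hrv hmean h hneg.le
    refine P.ae_eq_zero_of_lagrangian_le hK hη hrv hmean h (hle.trans ?_)
    rw [netValue_lagrangian h P.integrable_value P.integrable_revenue_prod, hbal, mul_zero,
      add_zero]
    exact hopt a' c' h' hbal'

end IsRegularProblem

/-! ### Distributions with a density -/

/-- The distribution with density `f` with respect to Lebesgue measure. -/
def densityMeasure (f : ℝ → ℝ) : Measure ℝ := volume.withDensity fun x => ENNReal.ofReal (f x)

instance (f : ℝ → ℝ) : NullSingletonClass (densityMeasure f) :=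
  inferInstanceAs (NullSingletonClass (volume.withDensity _))

instance (f : ℝ → ℝ) : SFinite (densityMeasure f) :=
  inferInstanceAs (SFinite (volume.withDensity _))

namespace IsDensityOn

variable {f g : ℝ → ℝ} {b b' : ℝ}

lemma nonneg (hf : IsDensityOn f b) (x : ℝ) : 0 ≤ f x := by
  by_cases hx : x ∈ Icc 0 b
  exacts [(hf.pos x hx).le, (hf.supp x hx).ge]

lemma right_pos (hf : IsDensityOn f b) : 0 < b := by
  by_contra! hb
  have hzero : ∫ x in (0 : ℝ)..b, f x = 0 := by
    rw [intervalIntegral.integral_of_ge hb, neg_eq_zero]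
    refine setIntegral_eq_zero_of_forall_eq_zero fun x hx => hf.supp x fun hx' => ?_
    exact hx.1.not_ge hx'.2
  exact one_ne_zero (hf.int_one.symm.trans hzero)

lemma indicator_eq (hf : IsDensityOn f b) : (Icc 0 b).indicator f = f :=
  indicator_eq_self.2 fun x hx => by_contra fun hxb => hx (hf.supp x hxb)

lemma measurable (hf : IsDensityOn f b) : Measurable f := by
  classical
  rw [← hf.indicator_eq, ← piecewise_eq_indicator]
  exact hf.cont.measurable_piecewise continuousOn_const measurableSet_Icc

lemma integrable (hf : IsDensityOn f b) : Integrable f := by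
  rw [← hf.indicator_eq, integrable_indicator_iff measurableSet_Icc]
  exact hf.cont.integrableOn_Icc

lemma setIntegral_densityMeasure (hf : IsDensityOn f b) {s : Set ℝ} (hs : MeasurableSet s)
    (k : ℝ → ℝ) : ∫ x in s, k x ∂densityMeasure f = ∫ x in s, f x * k x := by
  rw [densityMeasure, setIntegral_withDensity_eq_setIntegral_toReal_smul
    hf.measurable.ennreal_ofReal (.of_forall fun x => ENNReal.ofReal_lt_top) _ hs]
  simp only [ENNReal.toReal_ofReal (hf.nonneg _), smul_eq_mul]

lemma setIntegral_Iic_densityMeasure (hf : IsDensityOn f b) {x : ℝ} (hx : 0 ≤ x) (k : ℝ → ℝ) :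
    ∫ y in Iic x, k y ∂densityMeasure f = ∫ y in (0 : ℝ)..x, f y * k y := by
  rw [hf.setIntegral_densityMeasure measurableSet_Iic, intervalIntegral.integral_of_le hx,
    ← integral_Icc_eq_integral_Ioc]
  refine setIntegral_eq_of_subset_of_forall_sdiff_eq_zero measurableSet_Iic Icc_subset_Iic_self
    fun y hy => ?_
  rw [hf.supp y fun hyb => hy.2 ⟨hyb.1, hy.1⟩, zero_mul]

lemma ae_mem_Icc (hf : IsDensityOn f b) : ∀ᵐ x ∂densityMeasure f, x ∈ Icc 0 b := by
  rw [densityMeasure, ae_withDensity_iff hf.measurable.ennreal_ofReal]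
  refine .of_forall fun x hx => by_contra fun hxb => hx ?_
  rw [hf.supp x hxb, ENNReal.ofReal_zero]

lemma ae_mem_Ioc (hf : IsDensityOn f b) : ∀ᵐ x ∂densityMeasure f, x ∈ Ioc 0 b := by
  filter_upwards [hf.ae_mem_Icc, Measure.ae_ne (densityMeasure f) 0] with x hx hx0
  exact ⟨hx.1.lt_of_ne' hx0, hx.2⟩

lemma integral_densityMeasure (hf : IsDensityOn f b) (k : ℝ → ℝ) :
    ∫ x, k x ∂densityMeasure f = ∫ x in (0 : ℝ)..b, f x * k x := by
  rw [← hf.setIntegral_Iic_densityMeasure hf.right_pos.le,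
    Measure.restrict_eq_self_of_ae_mem (hf.ae_mem_Icc.mono fun x hx => mem_Iic.2 hx.2)]

lemma isProbabilityMeasure (hf : IsDensityOn f b) : IsProbabilityMeasure (densityMeasure f) where
  measure_univ := by
    have hone : ∫ x, f x = 1 := by
      rw [← hf.int_one, ← hf.indicator_eq, integral_indicator measurableSet_Icc, hf.indicator_eq,
        integral_Icc_eq_integral_Ioc, intervalIntegral.integral_of_le hf.right_pos.le]
    rw [densityMeasure, withDensity_apply _ .univ, setLIntegral_univ,
      ← ofReal_integral_eq_lintegral_ofReal hf.integrable (.of_forall hf.nonneg), hone,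
      ENNReal.ofReal_one]

lemma real_densityMeasure_Ioi (hf : IsDensityOn f b) {x : ℝ} (hx : 0 ≤ x) :
    (densityMeasure f).real (Ioi x) = 1 - CDF f x := by
  have := hf.isProbabilityMeasure
  have hIic : (densityMeasure f).real (Iic x) = CDF f x := by
    simpa [CDF] using hf.setIntegral_Iic_densityMeasure hx fun _ => 1
  rw [← compl_Iic, probReal_compl_eq_one_sub measurableSet_Iic, hIic]

lemma integral_integral_eq (hf : IsDensityOn f b) (hg : IsDensityOn g b') {φ : ℝ → ℝ → ℝ}
    (hφ : Integrable (Function.uncurry φ) ((densityMeasure f).prod (densityMeasure g))) :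
    ∫ u in (0 : ℝ)..b', ∫ α in (0 : ℝ)..b, f α * g u * φ α u =
      ∫ p, φ p.1 p.2 ∂(densityMeasure f).prod (densityMeasure g) := by
  rw [show (fun p : ℝ × ℝ => φ p.1 p.2) = Function.uncurry φ from rfl, integral_prod_symm _ hφ,
    hg.integral_densityMeasure]
  refine intervalIntegral.integral_congr fun u _ => ?_
  simp only [Function.uncurry_apply_pair, hf.integral_densityMeasure]
  rw [← intervalIntegral.integral_const_mul]
  exact intervalIntegral.integral_congr fun α _ => by ring

lemma ae_volume_of_ae_prod (hf : IsDensityOn f b) (hg : IsDensityOn g b') {p : ℝ × ℝ → Prop}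
    (hp : ∀ᵐ z ∂(densityMeasure f).prod (densityMeasure g), p z) :
    ∀ᵐ z, z ∈ Icc (0 : ℝ) b ×ˢ Icc (0 : ℝ) b' → p z := by
  have hf' : Measurable fun x => ENNReal.ofReal (f x) := hf.measurable.ennreal_ofReal
  have hg' : Measurable fun x => ENNReal.ofReal (g x) := hg.measurable.ennreal_ofReal
  have hmul : Measurable fun z : ℝ × ℝ => ENNReal.ofReal (f z.1) * ENNReal.ofReal (g z.2) :=
    (hf'.comp measurable_fst).mul (hg'.comp measurable_snd)
  rw [densityMeasure, densityMeasure, prod_withDensity hf' hg', ← Measure.volume_eq_prod,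
    ae_withDensity_iff hmul] at hp
  filter_upwards [hp] with z hz hmem
  exact hz <| mul_ne_zero (ENNReal.ofReal_pos.2 (hf.pos _ hmem.1)).ne'
    (ENNReal.ofReal_pos.2 (hg.pos _ hmem.2)).ne'

lemma integrable_of_antitoneOn (hf : IsDensityOn f b) {k : ℝ → ℝ} (hk : AntitoneOn k (Icc 0 b)) :
    Integrable k (densityMeasure f) := by
  have := hf.isProbabilityMeasure
  simpa only [IntegrableOn, Measure.restrict_eq_self_of_ae_mem hf.ae_mem_Icc] using
    hk.integrableOn_isCompact (μ := densityMeasure f) isCompact_Icc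

end IsDensityOn

/-! ### The regulation problem -/

/-- The net benefit `min(v, t(α,u)) - u` of allocating to the type `(α, u)`. -/
def netBenefit (v : ℝ) (t : ℝ → ℝ → ℝ) (α u : ℝ) : ℝ := min v (t α u) - u

/-- The properties shared by the two interference models: the interference `t` is nonnegative and
per unit of `u` nonincreasing, and it breaks even, `t α u = u`, at the nondecreasing threshold
`α = αstar u`. -/
structure IsInterference (t : ℝ → ℝ → ℝ) (αstar : ℝ → ℝ) : Prop where
  measurable : Measurable (Function.uncurry t)
  nonneg : ∀ α u, 0 < α → 0 < u → 0 ≤ t α u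
  antitoneOn_ratio : ∀ α, 0 < α → AntitoneOn (fun u => t α u / u) (Ioi 0)
  monotone : Monotone αstar
  threshold_nonneg : ∀ u, 0 < u → 0 ≤ αstar u
  le_of_threshold_lt : ∀ α u, 0 < u → αstar u < α → u ≤ t α u
  le_of_le_threshold : ∀ α u, 0 < u → α ≤ αstar u → t α u ≤ u

lemma InterferenceSpec.isInterference {t : ℝ → ℝ → ℝ} {αstar : ℝ → ℝ}
    (h : InterferenceSpec t αstar) : IsInterference t αstar := by
  rcases h with ⟨ht, hα⟩ | ⟨ht, hα⟩
  · obtain rfl : t = fun α _ => α := funext₂ ht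
    obtain rfl : αstar = id := funext hα
    exact
      { measurable := measurable_fst
        nonneg := fun α _ hα _ => hα.le
        antitoneOn_ratio := fun α hα u hu _ _ huu' => div_le_div_of_nonneg_left hα.le hu huu'
        monotone := monotone_id
        threshold_nonneg := fun _ => le_of_lt
        le_of_threshold_lt := fun _ _ _ => le_of_lt
        le_of_le_threshold := fun _ _ _ hα => hα }
  · obtain rfl : t = fun α u => α * u := funext₂ ht
    obtain rfl : αstar = fun _ => 1 := funext hα
    exact
      { measurable := measurable_fst.mul measurable_snd
        nonneg := fun α u hα hu => (mul_pos hα hu).le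
        antitoneOn_ratio := fun α _ u hu u' hu' _ => by
          rw [mem_Ioi] at hu hu'
          simp only [mul_div_cancel_right₀ α hu.ne', mul_div_cancel_right₀ α hu'.ne', le_refl]
        monotone := monotone_const
        threshold_nonneg := fun _ _ => zero_le_one
        le_of_threshold_lt := fun _ _ hu hα => le_mul_of_one_le_left hu.le hα.le
        le_of_le_threshold := fun _ _ hu hα => mul_le_of_le_one_left hu.le hα }

/-- The types with `u ≤ v` whose interference exceeds the break-even threshold: those to which an
allocation has nonnegative net benefit. -/
def efficientSet (αstar : ℝ → ℝ) (v : ℝ) : Set (ℝ × ℝ) :=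
  {p | 0 < p.1 ∧ p.2 ≤ v ∧ αstar p.2 < p.1}

namespace IsInterference

variable {t : ℝ → ℝ → ℝ} {αstar f g : ℝ → ℝ} {α u v ubar abar K : ℝ}

lemma measurable_netBenefit (ht : IsInterference t αstar) (v : ℝ) :
    Measurable (Function.uncurry (netBenefit v t)) :=
  (measurable_const.min ht.measurable).sub measurable_snd

lemma antitoneOn_netBenefit_div (ht : IsInterference t αstar) (hv : 0 ≤ v) (hα : 0 < α) :
    AntitoneOn (fun u => netBenefit v t α u / u) (Ioi 0) := by
  have hratio {u : ℝ} (hu : 0 < u) :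
      netBenefit v t α u / u = min (v / u) (t α u / u) - 1 := by
    rw [netBenefit, sub_div, div_self hu.ne', min_div_div_right hu.le]
  intro u hu u' hu' huu'
  simp only [hratio hu, hratio hu']
  exact sub_le_sub_right (min_le_min (div_le_div_of_nonneg_left hv hu huu')
    (ht.antitoneOn_ratio α hα hu hu' huu')) 1

lemma abs_netBenefit_le (ht : IsInterference t αstar) (hv : 0 ≤ v) (hα : 0 < α)
    (hu : u ∈ Ioc 0 ubar) : |netBenefit v t α u| ≤ v + ubar := by
  have hmin : 0 ≤ min v (t α u) := le_min hv (ht.nonneg α u hα hu.1)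
  have hminv : min v (t α u) ≤ v := min_le_left _ _
  rw [netBenefit, abs_le]
  constructor <;> linarith [hu.1, hu.2]

lemma inspectable_efficientSet (ht : IsInterference t αstar) (v : ℝ) :
    Inspectable (efficientSet αstar v) where
  measurableSet := (measurableSet_lt measurable_const measurable_fst).inter <|
    (measurableSet_le measurable_snd measurable_const).inter <|
      measurableSet_lt (ht.monotone.measurable.comp measurable_snd) measurable_fst
  zero_notMem _ h := lt_irrefl _ h.1
  mem_of_le _ _ _ hu h := ⟨h.1, hu.trans h.2.1, (ht.monotone hu).trans_lt h.2.2⟩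

lemma netBenefit_nonneg_of_mem (ht : IsInterference t αstar) (hu : 0 < u)
    (h : (α, u) ∈ efficientSet αstar v) : 0 ≤ netBenefit v t α u :=
  sub_nonneg.2 (le_min h.2.1 (ht.le_of_threshold_lt α u hu h.2.2))

lemma netBenefit_nonpos_of_notMem (ht : IsInterference t αstar) (hα : 0 < α) (hu : 0 < u)
    (h : (α, u) ∉ efficientSet αstar v) : netBenefit v t α u ≤ 0 := by
  refine sub_nonpos.2 ?_
  rcases lt_or_ge v u with hvu | huv
  · exact (min_le_left _ _).trans hvu.le
  · exact (min_le_right _ _).trans <| ht.le_of_le_threshold α u hu <|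
      not_lt.1 fun hlt => h ⟨hα, huv, hlt⟩

lemma isRegularProblem (ht : IsInterference t αstar) (hf : IsDensityOn f abar)
    (hg : IsDensityOn g ubar) (hv : v ∈ Ioc 0 ubar) (hr : AntitoneOn (rFun g) (Icc 0 ubar)) :
    IsRegularProblem (densityMeasure f) (densityMeasure g) v ubar (netBenefit v t) (rFun g) where
  mem_Ioc := hv
  ae_pos := hf.ae_mem_Ioc.mono fun _ hα => hα.1
  ae_mem_Ioc := hg.ae_mem_Ioc
  integrable_value := by
    have := hf.isProbabilityMeasure
    have := hg.isProbabilityMeasure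
    refine .of_bound (ht.measurable_netBenefit v).aestronglyMeasurable (v + ubar) ?_
    filter_upwards [Measure.quasiMeasurePreserving_fst.ae hf.ae_mem_Ioc,
      Measure.quasiMeasurePreserving_snd.ae hg.ae_mem_Ioc] with p hα hu
    exact ht.abs_netBenefit_le hv.1.le hα.1 hu
  integrable_value_threshold := by
    have := hf.isProbabilityMeasure
    refine .of_bound (ht.measurable_netBenefit v).of_uncurry_right.aestronglyMeasurable
      (v + ubar) ?_
    filter_upwards [hf.ae_mem_Ioc] with α hα
    exact ht.abs_netBenefit_le hv.1.le hα.1 hv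
  integrable_revenue := hg.integrable_of_antitoneOn hr
  antitoneOn_revenue := hr.mono Ioc_subset_Icc_self
  value_threshold_nonpos _ := sub_nonpos.2 (min_le_left _ _)
  value_neg _ _ hu := sub_neg.2 ((min_le_left _ _).trans_lt hu)
  antitoneOn_ratio _ hα := ht.antitoneOn_netBenefit_div hv.1.le hα

end IsInterference

lemma integral_mul_sub_nonpos_of_div_le {X : Type*} [MeasurableSpace X] {μ : Measure X}
    {φ r : X → ℝ} {K : ℝ} (hφ : Integrable φ μ) (hφr : Integrable (fun x => φ x * r x) μ)
    (hnonneg : 0 ≤ᵐ[μ] φ) (hK : (∫ x, φ x * r x ∂μ) / ∫ x, φ x ∂μ ≤ K) :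
    ∫ x, φ x * (r x - K) ∂μ ≤ 0 := by
  rcases (integral_nonneg_of_ae hnonneg).eq_or_lt with hzero | hpos
  · have hφ0 : φ =ᵐ[μ] 0 := (integral_eq_zero_iff_of_nonneg_ae hnonneg hφ).1 hzero.symm
    refine (integral_eq_zero_of_ae ?_).le
    filter_upwards [hφ0] with x hx
    simp [hx]
  · rw [div_le_iff₀ hpos] at hK
    simp only [mul_sub]
    rw [integral_sub hφr (hφ.mul_const K), integral_mul_const]
    linarith

namespace IsInterference

variable {t : ℝ → ℝ → ℝ} {αstar f g : ℝ → ℝ} {v ubar abar K : ℝ}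

lemma netValue_raiseOn_efficientSet (ht : IsInterference t αstar) {A U : Measure ℝ}
    [IsFiniteMeasure A] [IsFiniteMeasure U] (hU : ∀ᵐ u ∂U, 0 < u) {r : ℝ → ℝ}
    (hr : Integrable r U) (v K : ℝ) :
    netValue (A.prod U) (fun _ u => r u) K (raiseOn (efficientSet αstar v) 0)
        (raiseOn (efficientSet αstar v) 0) =
      ∫ u in Iic v, A.real (Ioi (αstar u)) * (r u - K) ∂U := by
  have hint := (Implementable.zero.raiseOn (ht.inspectable_efficientSet v)).integrable_netValue
    (w := fun _ u => r u) (hr.comp_snd A) K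
  rw [netValue, integral_prod_symm _ hint, ← integral_indicator measurableSet_Iic]
  refine integral_congr_ae ?_
  filter_upwards [hU] with u hu
  have hinner (α : ℝ) : r u * raiseOn (efficientSet αstar v) 0 α u -
      K * raiseOn (efficientSet αstar v) 0 α u =
      (Iic v).indicator (fun u => (Ioi (αstar u)).indicator (fun _ => r u - K) α) u := by
    have hpos (hlt : αstar u < α) : 0 < α := (ht.threshold_nonneg u hu).trans_lt hlt
    by_cases huv : u ≤ v <;> by_cases hα : αstar u < α <;>
      simp [raiseOn, efficientSet, huv, hα, hpos]
  simp only [hinner]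
  by_cases huv : u ∈ Iic v
  · simp only [indicator_of_mem huv, integral_indicator_const _ measurableSet_Ioi, smul_eq_mul]
  · simp only [indicator_of_notMem huv, integral_zero]

lemma Klow_eq (ht : IsInterference t αstar) (hf : IsDensityOn f abar) (hg : IsDensityOn g ubar)
    (hv : v ∈ Icc 0 ubar) :
    Klow f g αstar v =
      (∫ u in Iic v, (densityMeasure f).real (Ioi (αstar u)) * rFun g u ∂densityMeasure g) /
        ∫ u in Iic v, (densityMeasure f).real (Ioi (αstar u)) ∂densityMeasure g := by
  have htail {u : ℝ} (hu : u ∈ uIoc 0 v) :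
      (densityMeasure f).real (Ioi (αstar u)) = 1 - CDF f (αstar u) := by
    rw [uIoc_of_le hv.1] at hu
    exact hf.real_densityMeasure_Ioi (ht.threshold_nonneg u hu.1)
  rw [Klow, hg.setIntegral_Iic_densityMeasure hv.1, hg.setIntegral_Iic_densityMeasure hv.1]
  congr 1 <;> refine intervalIntegral.integral_congr_ae (.of_forall fun u hu => ?_)
  · rw [htail hu, rFun]
    rw [uIoc_of_le hv.1] at hu
    have hgu : g u ≠ 0 := (hg.pos u ⟨hu.1.le, hu.2.trans hv.2⟩).ne'
    field_simp
  · rw [htail hu, mul_comm]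

lemma netValue_raiseOn_efficientSet_nonpos (ht : IsInterference t αstar) (hf : IsDensityOn f abar)
    (hg : IsDensityOn g ubar) (hv : v ∈ Icc 0 ubar)
    (hr : Integrable (rFun g) (densityMeasure g)) (hK : Klow f g αstar v ≤ K) :
    netValue ((densityMeasure f).prod (densityMeasure g)) (fun _ u => rFun g u) K
      (raiseOn (efficientSet αstar v) 0) (raiseOn (efficientSet αstar v) 0) ≤ 0 := by
  have := hf.isProbabilityMeasure
  have := hg.isProbabilityMeasure
  set φ : ℝ → ℝ := fun u => (densityMeasure f).real (Ioi (αstar u))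
  have hφ : Measurable φ := Antitone.measurable fun u u' huu' =>
    measureReal_mono (Ioi_subset_Ioi (ht.monotone huu'))
  have hφ01 (u : ℝ) : φ u ∈ Icc (0 : ℝ) 1 := ⟨measureReal_nonneg, measureReal_le_one⟩
  rw [ht.netValue_raiseOn_efficientSet (hg.ae_mem_Ioc.mono fun _ hu => hu.1) hr]
  refine integral_mul_sub_nonpos_of_div_le ?_ ?_ (.of_forall fun u => (hφ01 u).1)
    (ht.Klow_eq hf hg hv ▸ hK)
  · simpa using integrable_mul_of_mem_Icc (integrable_const 1) hφ hφ01
  · exact (integrable_mul_of_mem_Icc hr hφ hφ01).integrableOn.congr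
      (.of_forall fun u => mul_comm _ _)

end IsInterference

section Regulator

variable {f g : ℝ → ℝ} {t a c : ℝ → ℝ → ℝ} {abar ubar v K : ℝ}

lemma Implementable.J_eq_netValue (h : Implementable a c) (hf : IsDensityOn f abar)
    (hg : IsDensityOn g ubar) (hw : Integrable (Function.uncurry (netBenefit v t))
      ((densityMeasure f).prod (densityMeasure g))) :
    J abar ubar v f g t a =
      netValue ((densityMeasure f).prod (densityMeasure g)) (netBenefit v t) 0 a c := by
  have hint := integrable_mul_of_mem_Icc hw h.meas_a fun p => h.mem_a p.1 p.2
  simpa [J, netValue, netBenefit, mul_assoc] using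
    hf.integral_integral_eq hg (φ := fun α u => netBenefit v t α u * a α u) hint

lemma Implementable.budget_iff (h : Implementable a c) (hf : IsDensityOn f abar)
    (hg : IsDensityOn g ubar) (hr : Integrable (rFun g) (densityMeasure g)) :
    ((∫ u in (0 : ℝ)..ubar, ∫ α in (0 : ℝ)..abar, f α * g u * rFun g u * a α u) =
        K * ∫ u in (0 : ℝ)..ubar, ∫ α in (0 : ℝ)..abar, f α * g u * c α u) ↔
      netValue ((densityMeasure f).prod (densityMeasure g)) (fun _ u => rFun g u) K a c = 0 := by
  have := hf.isProbabilityMeasure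
  have := hg.isProbabilityMeasure
  have ha := integrable_mul_of_mem_Icc (hr.comp_snd (densityMeasure f)) h.meas_a
    fun p => h.mem_a p.1 p.2
  have hc : Integrable (Function.uncurry c) ((densityMeasure f).prod (densityMeasure g)) := by
    simpa using integrable_mul_of_mem_Icc (integrable_const 1) h.meas_c fun p => h.mem_c p.1 p.2
  have hrevenue := hf.integral_integral_eq hg (φ := fun α u => rFun g u * a α u) ha
  simp only [← mul_assoc] at hrevenue
  have hcost := hf.integral_integral_eq hg hc
  have hsub : netValue ((densityMeasure f).prod (densityMeasure g)) (fun _ u => rFun g u) K a c =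
      (∫ p, rFun g p.2 * a p.1 p.2 ∂(densityMeasure f).prod (densityMeasure g)) -
        K * ∫ p, c p.1 p.2 ∂(densityMeasure f).prod (densityMeasure g) := by
    rw [← integral_const_mul]
    exact integral_sub ha (hc.const_mul K)
  rw [hsub, sub_eq_zero, hrevenue, hcost]

lemma feasible_iff (hf : IsDensityOn f abar) (hg : IsDensityOn g ubar)
    (hr : Integrable (rFun g) (densityMeasure g)) :
    Feasible abar ubar K f g a c ↔ Implementable a c ∧
      netValue ((densityMeasure f).prod (densityMeasure g)) (fun _ u => rFun g u) K a c = 0 := by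
  constructor
  · rintro ⟨hma, hmc, ha, hc, hbudget, hic, hinspect, hu, hα⟩
    have h : Implementable a c := ⟨hma, hmc, ha, hc, hic, hinspect, hu, hα⟩
    exact ⟨h, (h.budget_iff hf hg hr).1 hbudget⟩
  · rintro ⟨h, hbal⟩
    exact ⟨h.meas_a, h.meas_c, h.mem_a, h.mem_c, (h.budget_iff hf hg hr).2 hbal, h.ic, h.inspect,
      h.u_mono, h.α_mono0⟩

end Regulator

theorem sharing_above_v_general {abar ubar v K : ℝ} (hv : 0 < v) (hK0 : 0 ≤ K) {f g : ℝ → ℝ}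
    {t : ℝ → ℝ → ℝ} {αstar : ℝ → ℝ} (hf : IsDensityOn f abar) (hg : IsDensityOn g ubar)
    (hr : AntitoneOn (rFun g) (Icc 0 ubar)) (ht : IsInterference t αstar)
    (hK : Klow f g αstar v ≤ K) {a c : ℝ → ℝ → ℝ} (hopt : Optimal abar ubar v K f g t a c) :
    ∀ᵐ p : ℝ × ℝ ∂volume, p ∈ Icc (0:ℝ) abar ×ˢ Icc (0:ℝ) ubar →
      0 < p.1 → v < p.2 → a p.1 p.2 = 0 ∧ c p.1 p.2 = 0 := by
  rcases lt_or_ge ubar v with hlt | hle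
  · exact .of_forall fun p hp _ hvp => absurd (hvp.trans_le hp.2.2) hlt.not_gt
  have := hf.isProbabilityMeasure
  have := hg.isProbabilityMeasure
  have P := ht.isRegularProblem hf hg ⟨hv, hle⟩ hr
  have hfeas {a c} := feasible_iff (a := a) (c := c) (K := K) hf hg P.integrable_revenue
  obtain ⟨h, hbal⟩ := hfeas.1 hopt.1
  have hzero := P.ae_eq_zero_above hK0 (ht.inspectable_efficientSet v)
    (P.ae_mem.mono fun _ hp => ht.netBenefit_nonneg_of_mem hp.2.1)
    (P.ae_mem.mono fun _ hp => ht.netBenefit_nonpos_of_notMem hp.1 hp.2.1)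
    (ht.netValue_raiseOn_efficientSet_nonpos hf hg ⟨hv.le, hle⟩ P.integrable_revenue hK) h hbal
    fun a' c' h' hbal' => by
      rw [← h'.J_eq_netValue hf hg P.integrable_value, ← h.J_eq_netValue hf hg P.integrable_value]
      exact hopt.2 a' c' (hfeas.2 ⟨h', hbal'⟩)
  filter_upwards [hf.ae_volume_of_ae_prod hg hzero] with p hp hmem _ hvp
  have ha : a p.1 p.2 = 0 := hp hmem hvp
  exact ⟨ha, le_antisymm (ha ▸ h.inspect p.1 p.2) (h.mem_c p.1 p.2).1⟩

/-- for `K > K_low` and `r` strictly decreasing, every optimal pair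
satisfies `a°(α,u) = 0` and `c°(α,u) = 0` for almost every `(α,u)` with `α > 0`, `u > v`. -/
theorem sharing_above_v
    (abar ubar v K : ℝ) (habar : 0 < abar) (hubar : 0 < ubar) (hv : 0 < v) (hK0 : 0 ≤ K)
    (f g : ℝ → ℝ) (t : ℝ → ℝ → ℝ) (αstar : ℝ → ℝ)
    (hf : IsDensityOn f abar) (hg : IsDensityOn g ubar)
    (hr : StrictAntiOn (rFun g) (Icc 0 ubar))
    (ht : InterferenceSpec t αstar)
    (hK : Klow f g αstar v < K)
    (a c : ℝ → ℝ → ℝ)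
    (hopt : Optimal abar ubar v K f g t a c) :
    ∀ᵐ p : ℝ × ℝ ∂volume, p ∈ Icc (0:ℝ) abar ×ˢ Icc (0:ℝ) ubar →
      0 < p.1 → v < p.2 → a p.1 p.2 = 0 ∧ c p.1 p.2 = 0 :=
  sharing_above_v_general hv hK0 hf hg hr.antitoneOn ht.isInterference hK.le hopt

end Spectrum
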